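/- arXiv:2409.10511 — 5 statements merged into one kernel-verified Lean document; each statement's English description precedes it below -/
import Mathlib

section
/- For any integers t ≥ 2 and d ≥ 1, the asymptotic code rate of weak superimposed codes satisfies R(t,d) ≥ (log₂ e)/(t−1) · (1 − 1/t)^(t−1), where e is the base of the natural logarithm. -/
/-!
The bound is proved by random coding with deletion. Choose `n` random vectors of length `l`, all
entries being independent Bernoulli variables with parameter `p = 1 / t`. For a set `S` of `s`
vectors, a given coordinate has exactly one `1` in `S` with probability `q = s p (1 - p) ^ (s - 1)`
(`sum_wt_one`). Writing `c = (1 - 1 / t) ^ (t - 1) / (t - 1)`, one has `(s - 1) c ≤ q` for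
`2 ≤ s ≤ t` (`rate_le_prob`).

If `X` is the number of such coordinates and `0 < z < 1`, Markov's inequality for `z ^ X` gives
`P(X < d) ≤ z⁻ᵈ (1 - (1 - z) q) ^ l ≤ z⁻ᵈ exp (-(s - 1) c (1 - z) l)` (`sum_bad_le`).
For `n ≤ exp (c (1 - 2 z) l)` the expected number of bad sets of size between `2` and `t` is
therefore at most `n t z⁻ᵈ exp (-c z l)`, which is at most `n / 2` for large `l`. Deleting one vector
from each bad set leaves a weak superimposed code with at least `n / 2` vectors (`exists_code`).
Hence the rate is at least `c (1 - 3 z) log₂ e` for every small `z`, and `z → 0` gives the theorem.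

Expectations are written as finite sums over all `0/1` matrices `x : Fin l → Fin n → Bool` weighted
by their probabilities; row `x i` lists the `i`-th coordinates of the `n` vectors.
-/

/-- The coordinates in which exactly one vector of `S` has a `1`. -/
def exactlyOneCoords {l : ℕ} (S : Finset (Fin l → Bool)) : Finset (Fin l) :=
  Finset.univ.filter (fun i => (S.filter (fun c => c i = true)).card = 1)

/-- A weak `(t,d)`-superimposed code of length `l`: for every subset `S` of `C` with
`2 ≤ |S| ≤ t`, there are at least `d` coordinates in which exactly one vector of `S` has a `1`. -/
def IsWeakSuperimposed (t d l : ℕ) (C : Finset (Fin l → Bool)) : Prop :=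
  ∀ S ⊆ C, 2 ≤ S.card → S.card ≤ t → d ≤ (exactlyOneCoords S).card

/-- `F t d l` : the maximum size of a weak `(t,d)`-superimposed code of length `l`. -/
noncomputable def F (t d l : ℕ) : ℕ :=
  sSup {n | ∃ C : Finset (Fin l → Bool), IsWeakSuperimposed t d l C ∧ C.card = n}

/-- `R t d` : the asymptotic code rate of weak `(t,d)`-superimposed codes. -/
noncomputable def R (t d : ℕ) : ℝ :=
  Filter.atTop.limsup (fun l : ℕ => Real.logb 2 (F t d l) / l)

/-! ### One random coordinate -/

lemma sum_prod_bool {n : ℕ} (h : Fin n → Bool → ℝ) :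
    ∑ y : Fin n → Bool, ∏ j, h j (y j) = ∏ j, (h j true + h j false) := by
  have := Finset.prod_univ_sum (fun _ : Fin n => (Finset.univ : Finset Bool)) h
  rw [Fintype.piFinset_univ] at this
  rw [← this]
  simp

/-- The probability of `y` when its entries are independent Bernoulli variables with parameter
`p`. -/
noncomputable def wt (p : ℝ) {n : ℕ} (y : Fin n → Bool) : ℝ :=
  ∏ j, if y j = true then p else 1 - p

/-- Exactly one index in `S` is marked by `y`. -/
def ExactlyOne {n : ℕ} (S : Finset (Fin n)) (y : Fin n → Bool) : Prop :=
  (S.filter (fun j => y j = true)).card = 1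

instance {n : ℕ} (S : Finset (Fin n)) (y : Fin n → Bool) : Decidable (ExactlyOne S y) := by
  unfold ExactlyOne; infer_instance

lemma wt_nonneg {p : ℝ} (h0 : 0 ≤ p) (h1 : p ≤ 1) {n : ℕ} (y : Fin n → Bool) : 0 ≤ wt p y := by
  refine Finset.prod_nonneg fun j _ => ?_
  split_ifs <;> linarith

lemma sum_wt (p : ℝ) (n : ℕ) : ∑ y : Fin n → Bool, wt p y = 1 := by
  unfold wt
  rw [sum_prod_bool (fun _ b => if b = true then p else 1 - p)]
  simp

/-- The event `ExactlyOne S y` splits according to the marked index; each piece is a product event. -/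
lemma one_indicator {n : ℕ} (S : Finset (Fin n)) (y : Fin n → Bool) :
    (if ExactlyOne S y then (1 : ℝ) else 0)
      = ∑ j ∈ S, ∏ k, (if k ∈ S then (if y k = decide (k = j) then (1 : ℝ) else 0) else 1) := by
  have key : ∀ j, (∏ k, (if k ∈ S then (if y k = decide (k = j) then (1 : ℝ) else 0) else 1))
      = if ∀ k ∈ S, y k = decide (k = j) then (1 : ℝ) else 0 := by
    intro j
    rw [Fintype.prod_ite_mem, Finset.prod_boole]
    congr
  simp_rw [key]
  split_ifs with h
  · obtain ⟨a, ha⟩ := Finset.card_eq_one.1 h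
    have hm : ∀ k, (k ∈ S ∧ y k = true) ↔ k = a := by
      intro k
      have := congrArg (fun s => k ∈ s) ha
      simpa using this
    have haS := (hm a).2 rfl
    rw [Finset.sum_eq_single_of_mem a haS.1]
    · rw [if_pos]
      intro k hk
      have := hm k
      by_cases hka : k = a
      · simp [hka, haS.2]
      · simp only [hka, decide_false]
        by_contra hy
        exact hka (this.1 ⟨hk, by simpa using hy⟩)
    · intro b hb hba
      rw [if_neg]
      intro hall
      have := hall a haS.1
      rw [haS.2] at this
      simp at this
      exact hba this.symm
  · symm
    refine Finset.sum_eq_zero fun j hj => ?_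
    rw [if_neg]
    intro hall
    apply h
    refine Finset.card_eq_one.2 ⟨j, ?_⟩
    ext k
    simp only [Finset.mem_filter, Finset.mem_singleton]
    constructor
    · rintro ⟨hk, hy⟩
      rw [hall k hk] at hy
      simpa using hy
    · rintro rfl
      exact ⟨hj, by simp [hall k hj]⟩

lemma sum_wt_one (p : ℝ) {n : ℕ} (S : Finset (Fin n)) :
    ∑ y : Fin n → Bool, wt p y * (if ExactlyOne S y then (1 : ℝ) else 0)
      = S.card * (p * (1 - p) ^ (S.card - 1)) := by
  simp_rw [one_indicator, Finset.mul_sum]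
  rw [Finset.sum_comm]
  rw [Finset.sum_congr rfl (g := fun _ => p * (1 - p) ^ (S.card - 1)), Finset.sum_const,
    nsmul_eq_mul]
  intro j hj
  unfold wt
  simp_rw [← Finset.prod_mul_distrib]
  rw [sum_prod_bool (fun k b => (if b = true then p else 1 - p) *
    (if k ∈ S then (if b = decide (k = j) then (1 : ℝ) else 0) else 1))]
  rw [Finset.prod_congr rfl (g := fun k => if k ∈ S then (if k = j then p else 1 - p) else 1)]
  · rw [Fintype.prod_ite_mem, ← Finset.mul_prod_erase S _ hj]
    rw [Finset.prod_congr rfl (g := fun _ => 1 - p) (s₂ := S.erase j), Finset.prod_const,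
      Finset.card_erase_of_mem hj]
    · simp
    · intro k hk
      simp [Finset.ne_of_mem_erase hk]
  · intro k _
    rcases eq_or_ne k j with rfl | hkj
    · simp [hj]
    · by_cases hk : k ∈ S <;> simp [hk, hkj]

/-! ### The probability of a bad set -/

/-- The probability that fewer than `d` rows mark exactly one index of `S`, bounded by Markov's
inequality for `z ^ X` with `X` the number of rows that do. -/
lemma sum_bad_le {p z : ℝ} (h0 : 0 ≤ p) (h1 : p ≤ 1) (hz0 : 0 < z) (hz1 : z < 1) {n : ℕ} (l d : ℕ)
    (S : Finset (Fin n)) :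
    ∑ x : Fin l → Fin n → Bool, (∏ i, wt p (x i)) *
        (if (Finset.univ.filter (fun i => ExactlyOne S (x i))).card < d then (1 : ℝ) else 0)
      ≤ (z ^ d)⁻¹ * Real.exp (-(S.card * (p * (1 - p) ^ (S.card - 1)) * (1 - z) * l)) := by
  set q : ℝ := S.card * (p * (1 - p) ^ (S.card - 1)) with hq
  have hrow : ∑ y : Fin n → Bool, wt p y * (if ExactlyOne S y then z else 1) = 1 - (1 - z) * q := by
    have hsplit : ∀ y : Fin n → Bool, wt p y * (if ExactlyOne S y then z else 1)
        = wt p y - (1 - z) * (wt p y * (if ExactlyOne S y then (1 : ℝ) else 0)) := by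
      intro y
      split_ifs <;> ring
    simp_rw [hsplit]
    rw [Finset.sum_sub_distrib, ← Finset.mul_sum, sum_wt, sum_wt_one]
  have hrow0 : 0 ≤ 1 - (1 - z) * q := by
    rw [← hrow]
    refine Finset.sum_nonneg fun y _ => mul_nonneg (wt_nonneg h0 h1 y) ?_
    split_ifs <;> linarith
  calc _ ≤ ∑ x : Fin l → Fin n → Bool, (z ^ d)⁻¹ *
        ∏ i, (wt p (x i) * (if ExactlyOne S (x i) then z else 1)) := by
        refine Finset.sum_le_sum fun x _ => ?_
        have hpz : ∏ i, (if ExactlyOne S (x i) then z else 1)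
            = z ^ (Finset.univ.filter (fun i => ExactlyOne S (x i))).card := by
          rw [Finset.prod_ite]; simp
        rw [Finset.prod_mul_distrib, hpz, mul_left_comm]
        refine mul_le_mul_of_nonneg_left ?_ (Finset.prod_nonneg fun i _ => wt_nonneg h0 h1 _)
        split_ifs with h
        · rw [inv_mul_eq_div, one_le_div (pow_pos hz0 d)]
          exact pow_le_pow_of_le_one hz0.le hz1.le h.le
        · positivity
    _ = (z ^ d)⁻¹ * (1 - (1 - z) * q) ^ l := by
        rw [← Finset.mul_sum, ← hrow, Fintype.sum_pow]
    _ ≤ _ := by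
        refine mul_le_mul_of_nonneg_left ?_ (by positivity)
        calc (1 - (1 - z) * q) ^ l ≤ (Real.exp (-((1 - z) * q))) ^ l := by
              refine pow_le_pow_left₀ hrow0 ?_ l
              exact Real.one_sub_le_exp_neg _
          _ = _ := by
              rw [← Real.exp_nat_mul]; congr 1; ring

/-! ### Deletion -/

/-- Deleting one point of each member of `B` leaves a set containing no member of `B`. -/
lemma exists_delete {n : ℕ} (B : Finset (Finset (Fin n))) (hB : ∀ S ∈ B, S.Nonempty) :
    ∃ T : Finset (Fin n), n ≤ T.card + B.card ∧ ∀ S ∈ B, ¬ S ⊆ T := by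
  classical
  set I := B.attach.image (fun S => (hB S.1 S.2).choose) with hI
  refine ⟨Iᶜ, ?_, ?_⟩
  · have h1 : I.card ≤ B.card := by
      simpa using Finset.card_image_le (s := B.attach) (f := fun S => (hB S.1 S.2).choose)
    have h2 := Finset.card_add_card_compl I
    rw [Fintype.card_fin] at h2
    omega
  · intro S hS hST
    have h1 := hST (hB S hS).choose_spec
    rw [Finset.mem_compl] at h1
    exact h1 (Finset.mem_image.2 ⟨⟨S, hS⟩, Finset.mem_attach _ _, rfl⟩)

/-- A matrix with few bad index sets yields a code, whose words are the columns of the matrix that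
survive the deletion. Since `1 ≤ d`, a pair of equal columns is bad, so surviving columns are
distinct. -/
lemma code_of_matrix {n l t d : ℕ} (ht : 2 ≤ t) (hd : 1 ≤ d) (x : Fin l → Fin n → Bool)
    (hx : 2 * (Finset.univ.filter (fun S : Finset (Fin n) => (2 ≤ S.card ∧ S.card ≤ t) ∧
      (Finset.univ.filter (fun i => ExactlyOne S (x i))).card < d)).card ≤ n) :
    ∃ C : Finset (Fin l → Bool), IsWeakSuperimposed t d l C ∧ n ≤ 2 * C.card := by
  classical
  set B := Finset.univ.filter (fun S : Finset (Fin n) => (2 ≤ S.card ∧ S.card ≤ t) ∧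
      (Finset.univ.filter (fun i => ExactlyOne S (x i))).card < d) with hBdef
  obtain ⟨T, hT, hTB⟩ := exists_delete B (fun S hS => by
    rw [hBdef, Finset.mem_filter] at hS
    exact Finset.card_pos.1 (by omega))
  have good : ∀ S ⊆ T, 2 ≤ S.card → S.card ≤ t →
      d ≤ (Finset.univ.filter (fun i => ExactlyOne S (x i))).card := by
    intro S hS h2 h3
    by_contra hlt
    exact hTB S (by rw [hBdef, Finset.mem_filter]; exact ⟨Finset.mem_univ _, ⟨h2, h3⟩, by omega⟩) hS
  set v : Fin n → Fin l → Bool := fun j i => x i j with hv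
  have hinj : Set.InjOn v (T : Set (Fin n)) := by
    intro j hj k hk hjk
    by_contra hne
    have hc : ({j, k} : Finset (Fin n)).card = 2 := Finset.card_pair hne
    have h := good {j, k} (by
      intro a ha
      rcases Finset.mem_insert.1 ha with rfl | ha
      · exact hj
      · rw [Finset.mem_singleton.1 ha]; exact hk) hc.ge (hc.le.trans ht)
    obtain ⟨i, hi⟩ := Finset.card_pos.1 (lt_of_lt_of_le hd h)
    have hi := (Finset.mem_filter.1 hi).2
    have hxi : x i j = x i k := congrFun hjk i
    unfold ExactlyOne at hi
    rw [Finset.filter_insert, Finset.filter_singleton, hxi] at hi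
    by_cases hb : x i k = true
    · simp [hb, hne] at hi
    · simp [hb] at hi
  refine ⟨T.image v, ?_, ?_⟩
  · intro S hS h2 h3
    obtain ⟨S0, hS0, rfl⟩ := Finset.subset_image_iff.1 hS
    have hS0 : S0 ⊆ T := by exact_mod_cast hS0
    have hinj0 : Set.InjOn v (S0 : Set (Fin n)) := hinj.mono (by exact_mod_cast hS0)
    rw [Finset.card_image_of_injOn hinj0] at h2 h3
    refine (good S0 hS0 h2 h3).trans (le_of_eq ?_)
    unfold exactlyOneCoords ExactlyOne
    congr 1
    ext i
    simp only [Finset.mem_filter, Finset.mem_univ, true_and]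
    rw [Finset.filter_image, Finset.card_image_of_injOn
      (hinj0.mono (by exact_mod_cast Finset.filter_subset _ _))]
    exact ⟨fun h => (Finset.mem_filter.1 h).2,
      fun h => Finset.mem_filter.2 ⟨Finset.mem_univ _, h⟩⟩
  · rw [Finset.card_image_of_injOn hinj]
    omega

/-! ### The union bound -/

/-- The rate (in nats) to be achieved. -/
noncomputable def rc (t : ℕ) : ℝ := (1 - 1 / (t : ℝ)) ^ (t - 1) / ((t : ℝ) - 1)

lemma rc_pos {t : ℕ} (ht : 2 ≤ t) : 0 < rc t := by
  have h : (2 : ℝ) ≤ t := by exact_mod_cast ht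
  have h1 : 1 / (t : ℝ) < 1 := by rw [div_lt_one (by linarith)]; linarith
  unfold rc
  exact div_pos (pow_pos (by linarith) _) (by linarith)

/-- With `p = 1 / t`, the probability for sets of size `k + 1` is at least `k` times the rate, so the
exponents for all sizes up to `t` are as good as the one for `t`, where equality holds. -/
lemma rate_le_prob {t k : ℕ} (ht : 2 ≤ t) (hk : k + 1 ≤ t) :
    (k : ℝ) * rc t ≤ ((k + 1 : ℕ) : ℝ) * (1 / (t : ℝ) * (1 - 1 / (t : ℝ)) ^ (k + 1 - 1)) := by
  have h : (2 : ℝ) ≤ t := by exact_mod_cast ht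
  have hk' : (k : ℝ) + 1 ≤ t := by exact_mod_cast hk
  have h1 : 1 / (t : ℝ) < 1 := by rw [div_lt_one (by linarith)]; linarith
  have h0 : 0 ≤ 1 / (t : ℝ) := by positivity
  have hpow : (1 - 1 / (t : ℝ)) ^ (t - 1) ≤ (1 - 1 / (t : ℝ)) ^ k :=
    pow_le_pow_of_le_one (by linarith) (by linarith) (by omega)
  have hfrac : (k : ℝ) / ((t : ℝ) - 1) ≤ ((k : ℝ) + 1) / t := by
    rw [div_le_div_iff₀ (by linarith) (by linarith)]
    nlinarith
  have : 0 ≤ (1 - 1 / (t : ℝ)) ^ (t - 1) := pow_nonneg (by linarith) _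
  calc (k : ℝ) * rc t = (k : ℝ) / ((t : ℝ) - 1) * (1 - 1 / (t : ℝ)) ^ (t - 1) := by
        unfold rc; ring
    _ ≤ (((k : ℝ) + 1) / t) * (1 - 1 / (t : ℝ)) ^ k := by
        refine mul_le_mul hfrac hpow this (by positivity)
    _ = _ := by push_cast; ring

/-- The union bound over all index sets `S` with `2 ≤ |S| ≤ t`. -/
lemma sum_sets_le {n l t : ℕ} {c z D : ℝ} (hD : 0 ≤ D) (hc : 0 < c) (hz0 : 0 < z)
    (hsmall : t * (D * Real.exp (-(c * z * l))) ≤ 1 / 2)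
    (hn : (n : ℝ) ≤ Real.exp (c * (1 - 2 * z) * l)) :
    ∑ S : Finset (Fin n), (if 2 ≤ S.card ∧ S.card ≤ t then
      D * Real.exp (-(((S.card - 1 : ℕ) : ℝ) * c * (1 - z) * l)) else 0) ≤ n / 2 := by
  have hE : (n : ℝ) * Real.exp (-(c * (1 - z) * l)) ≤ Real.exp (-(c * z * l)) := by
    calc _ ≤ Real.exp (c * (1 - 2 * z) * l) * Real.exp (-(c * (1 - z) * l)) := by gcongr
      _ = _ := by rw [← Real.exp_add]; congr 1; ring
  have h := Finset.sum_powerset_apply_card (fun m => if 2 ≤ m ∧ m ≤ t then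
      D * Real.exp (-(((m - 1 : ℕ) : ℝ) * c * (1 - z) * l)) else 0)
      (x := (Finset.univ : Finset (Fin n)))
  rw [Finset.powerset_univ] at h
  rw [h]
  calc _ ≤ ∑ m ∈ Finset.range (Finset.univ : Finset (Fin n)).card.succ,
        (if m ∈ Finset.Icc 1 t then n * (D * Real.exp (-(c * z * l))) else 0) := by
        refine Finset.sum_le_sum fun m _ => ?_
        by_cases hm : 2 ≤ m ∧ m ≤ t
        · rw [if_pos hm, if_pos (Finset.mem_Icc.2 ⟨by omega, hm.2⟩), nsmul_eq_mul,
            Finset.card_fin]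
          obtain ⟨k, rfl⟩ : ∃ k, m = k + 1 := ⟨m - 1, by omega⟩
          have hch : (n.choose (k + 1) : ℝ) ≤ (n : ℝ) ^ (k + 1) := by
            exact_mod_cast Nat.choose_le_pow n (k + 1)
          have hexp1 : Real.exp (-(c * z * l)) ≤ 1 := by
            rw [Real.exp_le_one_iff]
            have : 0 ≤ c * z * l := by positivity
            linarith
          calc (n.choose (k + 1) : ℝ) * (D * Real.exp (-(((k + 1 - 1 : ℕ) : ℝ) * c * (1 - z) * l)))
              ≤ (n : ℝ) ^ (k + 1) *
                (D * Real.exp (-(((k + 1 - 1 : ℕ) : ℝ) * c * (1 - z) * l))) := by gcongr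
            _ = n * (D * (n * Real.exp (-(c * (1 - z) * l))) ^ k) := by
                rw [Nat.add_sub_cancel, mul_pow, ← Real.exp_nat_mul, pow_succ]
                have : -((k : ℝ) * c * (1 - z) * l) = k * -(c * (1 - z) * l) := by ring
                rw [this]; ring
            _ ≤ n * (D * (Real.exp (-(c * z * l))) ^ k) := by gcongr
            _ ≤ n * (D * (Real.exp (-(c * z * l))) ^ 1) := by
                have := pow_le_pow_of_le_one (Real.exp_pos (-(c * z * l))).le hexp1
                  (show 1 ≤ k by omega)
                gcongr
            _ = _ := by rw [pow_one]
        · rw [if_neg hm]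
          simp only [smul_zero]
          split_ifs <;> positivity
    _ ≤ t * (n * (D * Real.exp (-(c * z * l)))) := by
        rw [← Finset.sum_filter, Finset.sum_const, nsmul_eq_mul]
        have : ((Finset.range (Finset.univ : Finset (Fin n)).card.succ).filter
            (fun m => m ∈ Finset.Icc 1 t)).card ≤ t := by
          calc _ ≤ (Finset.Icc 1 t).card := Finset.card_le_card (by
                intro m hm; exact (Finset.mem_filter.1 hm).2)
            _ = t := by simp
        gcongr
    _ = n * (t * (D * Real.exp (-(c * z * l)))) := by ring
    _ ≤ n * (1 / 2) := by gcongr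
    _ = n / 2 := by ring

/-- Random coding with deletion: a matrix with at most the average number of bad sets has at most
`n / 2` of them. -/
lemma exists_code {n l t d : ℕ} (ht : 2 ≤ t) (hd : 1 ≤ d) {z : ℝ} (hz0 : 0 < z) (hz1 : z < 1)
    (hsmall : t * ((z ^ d)⁻¹ * Real.exp (-(rc t * z * l))) ≤ 1 / 2)
    (hn : (n : ℝ) ≤ Real.exp (rc t * (1 - 2 * z) * l)) :
    ∃ C : Finset (Fin l → Bool), IsWeakSuperimposed t d l C ∧ n ≤ 2 * C.card := by
  set p : ℝ := 1 / t with hp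
  have h : (2 : ℝ) ≤ t := by exact_mod_cast ht
  have h1 : p ≤ 1 := by rw [hp, div_le_one (by linarith)]; linarith
  have h0 : 0 ≤ p := by positivity
  let W : (Fin l → Fin n → Bool) → ℝ := fun x => ∏ i, wt p (x i)
  have hW0 : ∀ x, 0 ≤ W x := fun x => Finset.prod_nonneg fun i _ => wt_nonneg h0 h1 _
  have hW1 : ∑ x, W x = 1 := by
    have := Fintype.sum_pow (fun y : Fin n → Bool => wt p y) l
    rw [sum_wt, one_pow] at this
    exact this.symm
  let N : (Fin l → Fin n → Bool) → ℕ := fun x =>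
    (Finset.univ.filter (fun S : Finset (Fin n) => (2 ≤ S.card ∧ S.card ≤ t) ∧
      (Finset.univ.filter (fun i => ExactlyOne S (x i))).card < d)).card
  have hexp : ∑ x, W x * N x ≤ n / 2 := by
    refine le_trans ?_ (sum_sets_le (n := n) (D := (z ^ d)⁻¹) (by positivity) (rc_pos ht) hz0
      hsmall hn)
    have hN : ∀ x, (N x : ℝ) = ∑ S : Finset (Fin n), (if 2 ≤ S.card ∧ S.card ≤ t then
        (if (Finset.univ.filter (fun i => ExactlyOne S (x i))).card < d then (1 : ℝ) else 0) else 0) := by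
      intro x
      simp only [N, Finset.card_filter, ite_and]
      push_cast
      rfl
    simp_rw [hN, Finset.mul_sum]
    rw [Finset.sum_comm]
    refine Finset.sum_le_sum fun S _ => ?_
    split_ifs with hS
    · refine (sum_bad_le h0 h1 hz0 hz1 l d S).trans ?_
      obtain ⟨k, hk⟩ : ∃ k, S.card = k + 1 := ⟨S.card - 1, by omega⟩
      have hr := rate_le_prob ht (show k + 1 ≤ t by omega)
      rw [hk]
      simp only [Nat.add_sub_cancel] at hr ⊢
      have hz : 0 ≤ 1 - z := by linarith
      gcongr
    · simp
  obtain ⟨x, hx⟩ : ∃ x, (N x : ℝ) ≤ n / 2 := by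
    by_contra! hcon
    have : ∑ x, W x * (n / 2 : ℝ) < ∑ x, W x * N x := by
      obtain ⟨x0, _, hx0⟩ : ∃ x0 ∈ Finset.univ, 0 < W x0 := by
        by_contra! hle
        have := Finset.sum_nonpos hle
        linarith
      exact Finset.sum_lt_sum (fun x _ => mul_le_mul_of_nonneg_left (hcon x).le (hW0 x))
        ⟨x0, Finset.mem_univ _, mul_lt_mul_of_pos_left (hcon x0) hx0⟩
    rw [← Finset.sum_mul, hW1] at this
    linarith
  refine code_of_matrix ht hd x ?_
  have : (2 * N x : ℝ) ≤ n := by linarith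
  exact_mod_cast this

/-! ### Asymptotics -/

lemma card_mem_le {t d l m : ℕ}
    (h : m ∈ {n | ∃ C : Finset (Fin l → Bool), IsWeakSuperimposed t d l C ∧ C.card = n}) :
    m ≤ 2 ^ l := by
  obtain ⟨C, _, rfl⟩ := h
  simpa using Finset.card_le_univ C

lemma card_le_F {t d l : ℕ} {C : Finset (Fin l → Bool)} (h : IsWeakSuperimposed t d l C) :
    C.card ≤ F t d l :=
  le_csSup ⟨2 ^ l, fun _ hm => card_mem_le hm⟩ ⟨C, h, rfl⟩

lemma F_le (t d l : ℕ) : F t d l ≤ 2 ^ l :=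
  csSup_le' fun _ hm => card_mem_le hm

/-- The rate sequence is at most `1`, so its real-valued `limsup` is not a junk value. -/
lemma rate_le_one (t d l : ℕ) : Real.logb 2 (F t d l) / l ≤ 1 := by
  refine div_le_one_of_le₀ ?_ (by positivity)
  rcases Nat.eq_zero_or_pos (F t d l) with h | h
  · simp [h]
  · have h' : (0 : ℝ) < F t d l := by exact_mod_cast h
    rw [Real.logb_le_iff_le_rpow (by norm_num) h', Real.rpow_natCast]
    exact_mod_cast F_le t d l

open Filter Topology in
lemma eventually_rate {t d : ℕ} (ht : 2 ≤ t) (hd : 1 ≤ d) {z : ℝ} (hz0 : 0 < z)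
    (hz1 : z < 1 / 2) :
    ∀ᶠ l : ℕ in atTop,
      Real.logb 2 (Real.exp 1) * (rc t * (1 - 3 * z)) ≤ Real.logb 2 (F t d l) / l := by
  have hc := rc_pos ht
  have hlin : ∀ a : ℝ, 0 < a → Tendsto (fun l : ℕ => a * (l : ℝ)) atTop atTop := fun a ha =>
    Tendsto.const_mul_atTop ha tendsto_natCast_atTop_atTop
  have hcz : 0 < rc t * z := by positivity
  have hsm : Tendsto (fun l : ℕ => t * ((z ^ d)⁻¹ * Real.exp (-(rc t * z * l)))) atTop (𝓝 0) := by
    have := (Real.tendsto_exp_neg_atTop_nhds_zero.comp (hlin _ hcz)).const_mul ((z ^ d)⁻¹)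
    simpa using this.const_mul (t : ℝ)
  have hbig : 0 < rc t * (1 - 2 * z) := mul_pos hc (by linarith)
  filter_upwards [hsm.eventually (ge_mem_nhds (show (0 : ℝ) < 1 / 2 by norm_num)),
    (hlin _ hbig).eventually_ge_atTop 1, (hlin _ hcz).eventually_ge_atTop (Real.log 4),
    eventually_gt_atTop 0] with l h1 h2 h3 h4
  have hl : (0 : ℝ) < l := by exact_mod_cast h4
  set E := Real.exp (rc t * (1 - 2 * z) * l) with hE
  have hE2 : 2 ≤ E := by
    have := Real.add_one_le_exp (rc t * (1 - 2 * z) * l)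
    linarith
  obtain ⟨C, hC, hCn⟩ := exists_code ht hd hz0 (by linarith) h1 (Nat.floor_le (Real.exp_pos _).le)
  have hfl := Nat.lt_floor_add_one E
  have hCF : (C.card : ℝ) ≤ F t d l := by exact_mod_cast card_le_F hC
  have hCn' : ((⌊E⌋₊ : ℕ) : ℝ) ≤ 2 * C.card := by exact_mod_cast hCn
  have hF4 : E / 4 ≤ F t d l := by linarith
  -- The factor `4`, from rounding `E` down and from deletion, is absorbed by lowering the rate
  -- from `c (1 - 2 z)` to `c (1 - 3 z)`.
  have hlog : rc t * (1 - 3 * z) * l ≤ Real.log (F t d l) := by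
    calc rc t * (1 - 3 * z) * l ≤ Real.log (E / 4) := by
          rw [Real.log_div (by positivity) (by norm_num), hE, Real.log_exp]
          linarith
      _ ≤ _ := Real.log_le_log (by positivity) hF4
  have hl2 : 0 < Real.log 2 := Real.log_pos (by norm_num)
  rw [le_div_iff₀ hl]
  unfold Real.logb
  rw [Real.log_exp, one_div, mul_assoc, inv_mul_eq_div]
  gcongr

theorem weak_superimposed_rate_lower_bound (t d : ℕ) (ht : 2 ≤ t) (hd : 1 ≤ d) :
    Real.logb 2 (Real.exp 1) / ((t : ℝ) - 1) * (1 - 1 / (t : ℝ)) ^ (t - 1) ≤ R t d := by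
  have hR : ∀ z : ℝ, 0 < z → z < 1 / 2 →
      Real.logb 2 (Real.exp 1) * (rc t * (1 - 3 * z)) ≤ R t d := by
    intro z h0 h1
    unfold R
    refine Filter.le_limsup_of_frequently_le (eventually_rate ht hd h0 h1).frequently ?_
    exact Filter.isBoundedUnder_of ⟨1, fun l => rate_le_one t d l⟩
  have hlim : Filter.Tendsto (fun z : ℝ => Real.logb 2 (Real.exp 1) * (rc t * (1 - 3 * z)))
      (nhdsWithin 0 (Set.Ioi 0)) (nhds (Real.logb 2 (Real.exp 1) * (rc t * (1 - 3 * 0)))) := by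
    refine Filter.Tendsto.mono_left (Continuous.tendsto ?_ 0) nhdsWithin_le_nhds
    fun_prop
  have hfin := le_of_tendsto hlim (by
    filter_upwards [Ioo_mem_nhdsGT (show (0 : ℝ) < 1 / 2 by norm_num)] with z hz
    exact hR z hz.1 hz.2)
  refine le_trans (le_of_eq ?_) hfin
  unfold rc
  ring
end

section
/- Let t ≥ 2 and d ≥ 1 be integers, let l > d be an integer, and let n' ≥ 1 be a real number. If (log₂ n')/l ≤ (log₂ e)/(t−1) · (1 − 1/t)^(t−1) − log₂(2(t−1)·d·l^d)/l − 1/l, then there exists a weak (t,d)-superimposed code of length l and size at least n'. -/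
/-! ### A single random coordinate -/

/-- The probability of the value `b` for a Bernoulli entry of parameter `p`. -/
noncomputable def entryWeight (p : ℝ) (b : Bool) : ℝ := if b then p else 1 - p

lemma entryWeight_sum (p : ℝ) : ∑ b, entryWeight p b = 1 := by
  simp [entryWeight]

section Column

variable {ι : Type*} [DecidableEq ι]

/-- Exactly one entry indexed by `S` is `1` iff, for a unique `k ∈ S`, the restriction of `v` to `S`
is the indicator vector of `k`. The product form lets expectations factor over the entries. -/
lemma exactlyOne_indicator (S : Finset ι) (v : ι → Bool) :
    (if (S.filter (fun k => v k = true)).card = 1 then (1 : ℝ) else 0)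
      = ∑ k ∈ S, ∏ j ∈ S, if v j = decide (j = k) then (1 : ℝ) else 0 := by
  have key : ∀ k ∈ S, (∏ j ∈ S, if v j = decide (j = k) then (1 : ℝ) else 0)
      = if S.filter (fun k => v k = true) = {k} then 1 else 0 := by
    intro k hk
    rw [Finset.prod_boole]
    congr 1
    apply propext
    constructor
    · intro h
      ext j
      simp only [Finset.mem_filter, Finset.mem_singleton]
      constructor
      · rintro ⟨hj, hv⟩
        have := h j hj
        rw [hv] at this
        simpa using this.symm
      · rintro rfl
        exact ⟨hk, by simpa using h j hk⟩
    · intro h j hj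
      have := Finset.ext_iff.1 h j
      simp only [Finset.mem_filter, hj, true_and, Finset.mem_singleton] at this
      by_cases hjk : j = k <;> simp_all
  rw [Finset.sum_congr rfl key]
  split_ifs with h
  · obtain ⟨a, ha⟩ := Finset.card_eq_one.1 h
    have haS : a ∈ S := (Finset.mem_filter.1 (ha ▸ Finset.mem_singleton_self a)).1
    simp [ha, haS]
  · symm
    apply Finset.sum_eq_zero
    intro k _
    rw [if_neg]
    intro h'
    exact h (by simp [h'])

variable [Fintype ι]

lemma sum_prod_entryWeight (p : ℝ) :
    ∑ v : ι → Bool, ∏ k, entryWeight p (v k) = 1 := by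
  have := Finset.prod_univ_sum (fun _ : ι => (Finset.univ : Finset Bool))
    (fun _ b => entryWeight p b)
  simp only [entryWeight_sum, Finset.prod_const_one, Fintype.piFinset_univ] at this
  exact this.symm

/-- The probability that exactly one of the entries indexed by `S` is `1`. -/
lemma sum_entryWeight_exactlyOne (p : ℝ) (S : Finset ι) :
    ∑ v : ι → Bool, (∏ k, entryWeight p (v k)) *
      (if (S.filter (fun k => v k = true)).card = 1 then (1 : ℝ) else 0)
      = S.card * (p * (1 - p) ^ (S.card - 1)) := by
  simp_rw [exactlyOne_indicator, Finset.mul_sum]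
  rw [Finset.sum_comm]
  rw [← nsmul_eq_mul, ← Finset.sum_const]
  refine Finset.sum_congr rfl fun k hk => ?_
  have h1 : ∀ v : ι → Bool, (∏ j, entryWeight p (v j)) *
      (∏ j ∈ S, if v j = decide (j = k) then (1 : ℝ) else 0)
      = ∏ j, (entryWeight p (v j) *
          if j ∈ S then (if v j = decide (j = k) then (1 : ℝ) else 0) else 1) := by
    intro v
    rw [Finset.prod_mul_distrib]
    congr 1
    rw [Finset.prod_ite_mem, Finset.univ_inter]
  rw [Finset.sum_congr rfl fun v _ => h1 v]
  have h2 := Finset.prod_univ_sum (fun _ : ι => (Finset.univ : Finset Bool))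
    (fun j b => entryWeight p b *
          if j ∈ S then (if b = decide (j = k) then (1 : ℝ) else 0) else 1)
  rw [Fintype.piFinset_univ] at h2
  rw [← h2]
  have h3 : ∀ j, ∑ b, (entryWeight p b *
          if j ∈ S then (if b = decide (j = k) then (1 : ℝ) else 0) else 1)
      = if j ∈ S then entryWeight p (decide (j = k)) else 1 := by
    intro j
    split_ifs with hj
    · simp
    · simpa using entryWeight_sum p
  rw [Finset.prod_congr rfl fun j _ => h3 j, Finset.prod_ite_mem, Finset.univ_inter,
    ← Finset.mul_prod_erase S _ hk]
  congr 1
  · simp [entryWeight]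
  · rw [Finset.prod_congr rfl (g := fun _ => 1 - p), Finset.prod_const, Finset.card_erase_of_mem hk]
    intro j hj
    simp [entryWeight, Finset.ne_of_mem_erase hj]

/-- The moment generating function, at a single coordinate, of the exactly-one indicator. -/
lemma sum_entryWeight_pow (p z : ℝ) (S : Finset ι) :
    ∑ v : ι → Bool, (∏ k, entryWeight p (v k)) *
      (if (S.filter (fun k => v k = true)).card = 1 then z else 1)
      = 1 - (1 - z) * (S.card * (p * (1 - p) ^ (S.card - 1))) := by
  rw [← sum_entryWeight_exactlyOne, Finset.mul_sum]
  refine Eq.trans ?_ (congrArg (fun x => x - _) (sum_prod_entryWeight (ι := ι) p))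
  rw [← Finset.sum_sub_distrib]
  refine Finset.sum_congr rfl fun v _ => ?_
  split_ifs <;> ring

end Column

/-! ### Random matrices and the tail bound -/

/-- The probability of an `n × l` binary matrix with independent Bernoulli entries of parameter `p`.
The matrix is stored by coordinates: `M i k` is the `i`-th entry of the `k`-th vector. -/
noncomputable def matrixWeight {l n : ℕ} (p : ℝ) (M : Fin l → Fin n → Bool) : ℝ :=
  ∏ i, ∏ k, entryWeight p (M i k)

/-- The coordinates in which exactly one of the vectors with index in `S` has a `1`. Unlike
`exactlyOneCoords`, equal vectors with different indices are counted separately. -/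
def hitCoords {l n : ℕ} (M : Fin l → Fin n → Bool) (S : Finset (Fin n)) : Finset (Fin l) :=
  Finset.univ.filter (fun i => (S.filter (fun k => M i k = true)).card = 1)

lemma matrixWeight_pos {l n : ℕ} {p : ℝ} (h0 : 0 < p) (h1 : p < 1) (M : Fin l → Fin n → Bool) :
    0 < matrixWeight p M := by
  refine Finset.prod_pos fun i _ => Finset.prod_pos fun k _ => ?_
  unfold entryWeight
  split_ifs <;> linarith

lemma sum_matrixWeight_pow {l n : ℕ} (p z : ℝ) (S : Finset (Fin n)) :
    ∑ M : Fin l → Fin n → Bool, matrixWeight p M * z ^ (hitCoords M S).card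
      = (1 - (1 - z) * (S.card * (p * (1 - p) ^ (S.card - 1)))) ^ l := by
  have h2 := Finset.prod_univ_sum (fun _ : Fin l => (Finset.univ : Finset (Fin n → Bool)))
    (fun _ v => (∏ k, entryWeight p (v k)) *
      (if (S.filter (fun k => v k = true)).card = 1 then z else 1))
  rw [Fintype.piFinset_univ] at h2
  simp only [sum_entryWeight_pow, Finset.prod_const, Finset.card_univ, Fintype.card_fin] at h2
  rw [h2]
  refine Finset.sum_congr rfl fun M _ => ?_
  rw [Finset.prod_mul_distrib, Finset.prod_ite, Finset.prod_const, Finset.prod_const_one, mul_one]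
  rfl

lemma sum_matrixWeight {l n : ℕ} (p : ℝ) :
    ∑ M : Fin l → Fin n → Bool, matrixWeight p M = 1 := by
  simpa using sum_matrixWeight_pow (l := l) (n := n) p 1 ∅

/-- Tail bound: the probability that `S` has fewer than `d` exactly-one coordinates, by Markov's
inequality for `(1 / l) ^ X` where `X` is the number of such coordinates. -/
lemma sum_matrixWeight_bad {l n d : ℕ} {p : ℝ} (hl : 1 ≤ l) (h0 : 0 < p) (h1 : p < 1)
    (S : Finset (Fin n)) {q : ℝ} (hq : q = S.card * (p * (1 - p) ^ (S.card - 1))) :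
    ∑ M : Fin l → Fin n → Bool, matrixWeight p M * (if (hitCoords M S).card < d then 1 else 0)
      ≤ Real.exp 1 * (l : ℝ) ^ (d - 1) * Real.exp (-(q * l)) := by
  have hl' : (1 : ℝ) ≤ l := by exact_mod_cast hl
  have hlp : (0 : ℝ) < l := by linarith
  -- `q` is a probability, hence at most `1`.
  have hq1 : q ≤ 1 := by
    rw [hq, ← sum_entryWeight_exactlyOne]
    refine (Finset.sum_le_sum fun v _ => ?_).trans_eq (sum_prod_entryWeight (ι := Fin n) p)
    refine mul_le_of_le_one_right ?_ (by split_ifs <;> norm_num)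
    refine Finset.prod_nonneg fun k _ => ?_
    unfold entryWeight
    split_ifs <;> linarith
  have hmarkov : ∑ M : Fin l → Fin n → Bool,
        matrixWeight p M * (if (hitCoords M S).card < d then 1 else 0)
      ≤ ∑ M : Fin l → Fin n → Bool,
        (l : ℝ) ^ (d - 1) * (matrixWeight p M * (1 / (l : ℝ)) ^ (hitCoords M S).card) := by
    refine Finset.sum_le_sum fun M _ => ?_
    rw [mul_left_comm]
    refine mul_le_mul_of_nonneg_left ?_ (matrixWeight_pos h0 h1 M).le
    split_ifs with h
    · rw [one_div, inv_pow, ← div_eq_mul_inv, le_div_iff₀ (by positivity), one_mul]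
      exact pow_le_pow_right₀ hl' (by omega)
    · positivity
  refine hmarkov.trans ?_
  rw [← Finset.mul_sum, sum_matrixWeight_pow, ← hq, mul_comm (Real.exp 1), mul_assoc]
  refine mul_le_mul_of_nonneg_left ?_ (by positivity)
  have hz1 : 1 / (l : ℝ) ≤ 1 := by rw [div_le_one hlp]; exact hl'
  have hz0 : 0 < 1 / (l : ℝ) := by positivity
  have hb : 0 ≤ 1 - (1 - 1 / (l : ℝ)) * q := by nlinarith
  have he : 1 - (1 - 1 / (l : ℝ)) * q ≤ Real.exp (-((1 - 1 / (l : ℝ)) * q)) := by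
    have := Real.add_one_le_exp (-((1 - 1 / (l : ℝ)) * q))
    linarith
  refine (pow_le_pow_left₀ hb he l).trans ?_
  rw [← Real.exp_nat_mul, ← Real.exp_add, Real.exp_le_exp]
  have : (l : ℝ) * (-((1 - 1 / (l : ℝ)) * q)) = q - q * l := by
    field_simp
    ring
  linarith

/-! ### The exponent as a function of the set size -/

/-- The per-vector exponent of a set of size `k + 1` is smallest at the maximal size `t`. -/
lemma rate_le {t k : ℕ} (ht : 2 ≤ t) (hk : 1 ≤ k) (hkt : k + 1 ≤ t) :
    (k : ℝ) * ((1 - 1 / (t : ℝ)) ^ (t - 1) / ((t : ℝ) - 1))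
      ≤ ((k + 1 : ℕ) : ℝ) * (1 / (t : ℝ) * (1 - 1 / (t : ℝ)) ^ k) := by
  have ht' : (2 : ℝ) ≤ t := by exact_mod_cast ht
  have hkt' : (k : ℝ) + 1 ≤ t := by exact_mod_cast hkt
  have hu1 : 1 / (t : ℝ) ≤ 1 := by rw [div_le_one (by linarith)]; linarith
  have hu0 : 0 < 1 / (t : ℝ) := by positivity
  have hpow : (1 - 1 / (t : ℝ)) ^ (t - 1) ≤ (1 - 1 / (t : ℝ)) ^ k :=
    pow_le_pow_of_le_one (by linarith) (by linarith) (by omega)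
  have hc : (k : ℝ) / ((t : ℝ) - 1) ≤ ((k : ℝ) + 1) / t := by
    rw [div_le_div_iff₀ (by linarith) (by linarith)]
    nlinarith
  calc (k : ℝ) * ((1 - 1 / (t : ℝ)) ^ (t - 1) / ((t : ℝ) - 1))
      = (k : ℝ) / ((t : ℝ) - 1) * (1 - 1 / (t : ℝ)) ^ (t - 1) := by ring
    _ ≤ ((k : ℝ) + 1) / t * (1 - 1 / (t : ℝ)) ^ k := by
        refine mul_le_mul hc hpow (pow_nonneg (by linarith) _) (by positivity)
    _ = _ := by push_cast; ring

/-! ### Bad sets and the deletion step -/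

/-- The index sets of size between `2` and `t` that violate the superimposed condition. -/
def badSets {l n : ℕ} (t d : ℕ) (M : Fin l → Fin n → Bool) : Finset (Finset (Fin n)) :=
  (Finset.Icc 2 t).biUnion fun s =>
    (Finset.powersetCard s Finset.univ).filter fun S => (hitCoords M S).card < d

lemma mem_badSets {l n t d : ℕ} {M : Fin l → Fin n → Bool} {S : Finset (Fin n)} :
    S ∈ badSets t d M ↔ (2 ≤ S.card ∧ S.card ≤ t) ∧ (hitCoords M S).card < d := by
  simp [badSets, Finset.mem_powersetCard]

/-- The alteration step: deleting one index from each bad set leaves a code. -/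
lemma exists_code_of_bad_le {l n t d : ℕ} (ht : 2 ≤ t) (hd : 1 ≤ d) (M : Fin l → Fin n → Bool) :
    ∃ C : Finset (Fin l → Bool), IsWeakSuperimposed t d l C ∧ n ≤ C.card + (badSets t d M).card := by
  classical
  have hne : ∀ S ∈ badSets t d M, S.Nonempty := by
    intro S h
    rw [← Finset.card_pos]
    have := (mem_badSets.1 h).1.1
    omega
  set D : Finset (Fin n) :=
    (badSets t d M).attach.image (fun S => (hne S.1 S.2).choose) with hD
  have hDcard : D.card ≤ (badSets t d M).card := by
    simpa using Finset.card_image_le (s := (badSets t d M).attach)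
      (f := fun S => (hne S.1 S.2).choose)
  have hgood : ∀ S ⊆ Dᶜ, 2 ≤ S.card → S.card ≤ t → d ≤ (hitCoords M S).card := by
    intro S hS h2 h3
    by_contra hlt
    have hbad : S ∈ badSets t d M := mem_badSets.2 ⟨⟨h2, h3⟩, by omega⟩
    have hmem := (hne S hbad).choose_spec
    refine Finset.mem_compl.1 (hS hmem) ?_
    exact Finset.mem_image.2 ⟨⟨S, hbad⟩, Finset.mem_attach _ _, rfl⟩
  set row : Fin n → Fin l → Bool := fun k i => M i k with hrow
  have hinj : Set.InjOn row (Dᶜ : Finset (Fin n)) := by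
    intro a ha b hb hab
    by_contra hne'
    have hc : ({a, b} : Finset (Fin n)).card = 2 := Finset.card_pair hne'
    have hsub : ({a, b} : Finset (Fin n)) ⊆ Dᶜ := by
      intro x hx
      rcases Finset.mem_insert.1 hx with rfl | hx
      · exact ha
      · rw [Finset.mem_singleton.1 hx]; exact hb
    have h1 := hgood _ hsub hc.ge (hc.le.trans ht)
    -- Equal vectors agree in every coordinate, so none contains exactly one `1`.
    have h0 : hitCoords M {a, b} = ∅ := by
      refine Finset.filter_eq_empty_iff.2 fun i _ => ?_
      have hi : M i a = M i b := congrFun hab i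
      cases h : M i b <;> simp [Finset.filter_insert, Finset.filter_singleton, hi, h, hne']
    rw [h0, Finset.card_empty] at h1
    omega
  refine ⟨Dᶜ.image row, ?_, ?_⟩
  · intro T hT h2 h3
    obtain ⟨S, hS, rfl⟩ := Finset.subset_image_iff.1 hT
    have hSinj : Set.InjOn row S := hinj.mono hS
    rw [Finset.card_image_of_injOn hSinj] at h2 h3
    have heq : exactlyOneCoords (S.image row) = hitCoords M S := by
      refine Finset.filter_congr fun i _ => ?_
      rw [Finset.filter_image, Finset.card_image_of_injOn]
      exact hSinj.mono (Finset.filter_subset _ _)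
    rw [heq]
    exact hgood S hS h2 h3
  · rw [Finset.card_image_of_injOn hinj, Finset.card_compl, Fintype.card_fin]
    omega

/-! ### The first-moment bound and the choice of parameters -/

/-- The first-moment bound: some matrix has at most half as many bad sets as vectors. The binomial
coefficients are estimated by `(m + 1).choose (k + 1) ≤ (m + 1) m ^ k / 2`. -/
lemma exists_few_badSets {l t d : ℕ} (m : ℕ) (ht : 2 ≤ t) (hd : 1 ≤ d) (hl : d < l)
    (hm : (m : ℝ) * Real.exp (-((1 - 1 / (t : ℝ)) ^ (t - 1) / ((t : ℝ) - 1) * l))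
      ≤ 1 / (2 * ((t : ℝ) - 1) * d * (l : ℝ) ^ d)) :
    ∃ M : Fin l → Fin (m + 1) → Bool, ((badSets t d M).card : ℝ) ≤ ((m : ℝ) + 1) / 2 := by
  have ht' : (2 : ℝ) ≤ t := by exact_mod_cast ht
  have hd' : (1 : ℝ) ≤ d := by exact_mod_cast hd
  have hl' : (2 : ℝ) ≤ l := by exact_mod_cast (show 2 ≤ l by omega)
  set p : ℝ := 1 / (t : ℝ) with hp
  have hp0 : 0 < p := by positivity
  have hp1 : p < 1 := by rw [hp, div_lt_one (by linarith)]; linarith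
  set r : ℝ := (1 - p) ^ (t - 1) / ((t : ℝ) - 1) with hr
  set y : ℝ := (m : ℝ) * Real.exp (-(r * l)) with hy
  have hy0 : 0 ≤ y := by positivity
  have hlpow : (1 : ℝ) ≤ (l : ℝ) ^ d := one_le_pow₀ (by linarith)
  have htpos : 0 < (t : ℝ) - 1 := by linarith
  have hden : (1 : ℝ) ≤ 2 * ((t : ℝ) - 1) * d * (l : ℝ) ^ d := by
    have h1 : (1 : ℝ) ≤ 2 * ((t : ℝ) - 1) := by linarith
    exact one_le_mul_of_one_le_of_one_le (one_le_mul_of_one_le_of_one_le h1 hd') hlpow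
  have hy1 : y ≤ 1 := hm.trans (by rw [div_le_one (by linarith)]; exact hden)
  have hsize : ∀ s ∈ Finset.Icc 2 t,
      ∑ S ∈ Finset.powersetCard s (Finset.univ : Finset (Fin (m + 1))),
        ∑ M : Fin l → Fin (m + 1) → Bool,
          matrixWeight p M * (if (hitCoords M S).card < d then 1 else 0)
      ≤ ((m : ℝ) + 1) / 2 * (Real.exp 1 * (l : ℝ) ^ (d - 1) * y) := by
    intro s hs
    obtain ⟨hs2, hst⟩ := Finset.mem_Icc.1 hs
    obtain ⟨k, rfl⟩ : ∃ k, s = k + 1 := ⟨s - 1, by omega⟩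
    have hk : 1 ≤ k := by omega
    have hchoose : (((m + 1).choose (k + 1) : ℕ) : ℝ) ≤ ((m : ℝ) + 1) / 2 * (m : ℝ) ^ k := by
      have h1 : (m + 1) * m.choose k = (m + 1).choose (k + 1) * (k + 1) :=
        Nat.add_one_mul_choose_eq m k
      have h2 : (m + 1).choose (k + 1) * 2 ≤ (m + 1) * m ^ k := by
        calc (m + 1).choose (k + 1) * 2 ≤ (m + 1).choose (k + 1) * (k + 1) :=
              Nat.mul_le_mul_left _ (by omega)
          _ = (m + 1) * m.choose k := h1.symm
          _ ≤ (m + 1) * m ^ k := Nat.mul_le_mul_left _ (Nat.choose_le_pow m k)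
      have h3 : (((m + 1).choose (k + 1) : ℕ) : ℝ) * 2 ≤ ((m : ℝ) + 1) * (m : ℝ) ^ k := by
        exact_mod_cast h2
      linarith
    set q : ℝ := ((k + 1 : ℕ) : ℝ) * (p * (1 - p) ^ k) with hq
    have hrate : (k : ℝ) * r ≤ q := rate_le ht hk hst
    have hexp : (m : ℝ) ^ k * Real.exp (-(q * l)) ≤ y := by
      calc (m : ℝ) ^ k * Real.exp (-(q * l))
          ≤ (m : ℝ) ^ k * Real.exp ((k : ℝ) * (-(r * l))) := by
            refine mul_le_mul_of_nonneg_left (Real.exp_le_exp.2 ?_) (by positivity)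
            nlinarith
        _ = y ^ k := by rw [Real.exp_nat_mul, hy, mul_pow]
        _ ≤ y := pow_le_of_le_one hy0 hy1 (by omega)
    calc _ ≤ ∑ S ∈ Finset.powersetCard (k + 1) (Finset.univ : Finset (Fin (m + 1))),
            Real.exp 1 * (l : ℝ) ^ (d - 1) * Real.exp (-(q * l)) := by
          refine Finset.sum_le_sum fun S hS => ?_
          have hc := (Finset.mem_powersetCard.1 hS).2
          exact sum_matrixWeight_bad (by omega) hp0 hp1 S (by rw [hc, hq, Nat.add_sub_cancel])
      _ = ((m + 1).choose (k + 1) : ℕ) *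
            (Real.exp 1 * (l : ℝ) ^ (d - 1) * Real.exp (-(q * l))) := by
          rw [Finset.sum_const, Finset.card_powersetCard, Finset.card_univ, Fintype.card_fin,
            nsmul_eq_mul]
      _ ≤ ((m : ℝ) + 1) / 2 * (m : ℝ) ^ k *
            (Real.exp 1 * (l : ℝ) ^ (d - 1) * Real.exp (-(q * l))) :=
          mul_le_mul_of_nonneg_right hchoose (by positivity)
      _ = ((m : ℝ) + 1) / 2 * (Real.exp 1 * (l : ℝ) ^ (d - 1) *
            ((m : ℝ) ^ k * Real.exp (-(q * l)))) := by ring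
      _ ≤ _ := by gcongr
  have hbound : ((t : ℝ) - 1) * (Real.exp 1 * (l : ℝ) ^ (d - 1) * y) ≤ 1 := by
    have hld : (l : ℝ) ^ d = (l : ℝ) ^ (d - 1) * l := by
      rw [← pow_succ, Nat.sub_add_cancel hd]
    have hB : 0 < (l : ℝ) ^ (d - 1) := by positivity
    calc ((t : ℝ) - 1) * (Real.exp 1 * (l : ℝ) ^ (d - 1) * y)
        ≤ ((t : ℝ) - 1) * (Real.exp 1 * (l : ℝ) ^ (d - 1) *
            (1 / (2 * ((t : ℝ) - 1) * d * (l : ℝ) ^ d))) := by gcongr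
      _ = Real.exp 1 / (2 * d * l) := by
          rw [hld]
          field_simp
      _ ≤ 1 := by
          rw [div_le_one (by positivity)]
          have := Real.exp_one_lt_d9
          nlinarith
  have htotal : ∑ M : Fin l → Fin (m + 1) → Bool, matrixWeight p M * ((badSets t d M).card : ℝ)
      ≤ ∑ M : Fin l → Fin (m + 1) → Bool, matrixWeight p M * (((m : ℝ) + 1) / 2) := by
    rw [← Finset.sum_mul, sum_matrixWeight, one_mul]
    calc ∑ M : Fin l → Fin (m + 1) → Bool, matrixWeight p M * ((badSets t d M).card : ℝ)
        ≤ ∑ M : Fin l → Fin (m + 1) → Bool, ∑ s ∈ Finset.Icc 2 t,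
            ∑ S ∈ Finset.powersetCard s (Finset.univ : Finset (Fin (m + 1))),
            matrixWeight p M * (if (hitCoords M S).card < d then 1 else 0) := by
          refine Finset.sum_le_sum fun M _ => ?_
          simp_rw [← Finset.mul_sum]
          refine mul_le_mul_of_nonneg_left ?_ (matrixWeight_pos hp0 hp1 M).le
          simp_rw [Finset.sum_boole]
          exact_mod_cast Finset.card_biUnion_le
      _ = ∑ s ∈ Finset.Icc 2 t,
            ∑ S ∈ Finset.powersetCard s (Finset.univ : Finset (Fin (m + 1))),
            ∑ M : Fin l → Fin (m + 1) → Bool,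
            matrixWeight p M * (if (hitCoords M S).card < d then 1 else 0) := by
          rw [Finset.sum_comm]
          exact Finset.sum_congr rfl fun s _ => Finset.sum_comm
      _ ≤ ∑ s ∈ Finset.Icc 2 t, ((m : ℝ) + 1) / 2 * (Real.exp 1 * (l : ℝ) ^ (d - 1) * y) :=
          Finset.sum_le_sum hsize
      _ = ((m : ℝ) + 1) / 2 * (((t : ℝ) - 1) * (Real.exp 1 * (l : ℝ) ^ (d - 1) * y)) := by
          rw [Finset.sum_const, Nat.card_Icc, nsmul_eq_mul,
            show t + 1 - 2 = t - 1 by omega, Nat.cast_sub (by omega), Nat.cast_one]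
          ring
      _ ≤ ((m : ℝ) + 1) / 2 := mul_le_of_le_one_right (by positivity) hbound
  obtain ⟨M, _, hM⟩ := Finset.exists_le_of_sum_le Finset.univ_nonempty htotal
  exact ⟨M, le_of_mul_le_mul_left hM (matrixWeight_pos hp0 hp1 M)⟩

theorem weak_superimposed_existence (t d l : ℕ) (ht : 2 ≤ t) (hd : 1 ≤ d) (hl : d < l)
    (n' : ℝ) (hn' : 1 ≤ n')
    (h : Real.logb 2 n' / l ≤
        Real.logb 2 (Real.exp 1) / ((t : ℝ) - 1) * (1 - 1 / (t : ℝ)) ^ (t - 1)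
          - Real.logb 2 (2 * ((t : ℝ) - 1) * d * (l : ℝ) ^ d) / l - 1 / l) :
    ∃ C : Finset (Fin l → Bool), IsWeakSuperimposed t d l C ∧ n' ≤ (C.card : ℝ) := by
  have ht' : (2 : ℝ) ≤ t := by exact_mod_cast ht
  have hd' : (1 : ℝ) ≤ d := by exact_mod_cast hd
  have hlp : (0 : ℝ) < l := by exact_mod_cast (show 0 < l by omega)
  have htpos : 0 < (t : ℝ) - 1 := by linarith
  set r : ℝ := (1 - 1 / (t : ℝ)) ^ (t - 1) / ((t : ℝ) - 1) with hr
  set A : ℝ := 2 * ((t : ℝ) - 1) * d * (l : ℝ) ^ d with hA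
  have hApos : 0 < A := by positivity
  have hlog2 : 0 < Real.log 2 := Real.log_pos (by norm_num)
  have hlog : Real.log (2 * n' * A) ≤ r * l := by
    rw [Real.log_mul (by positivity) hApos.ne', Real.log_mul (by norm_num) (by positivity)]
    have h1 := mul_le_mul_of_nonneg_right h (mul_pos hlp hlog2).le
    simp only [Real.logb, Real.log_exp] at h1
    have e1 : Real.log n' / Real.log 2 / l * (l * Real.log 2) = Real.log n' := by field_simp
    have e2 : (1 / Real.log 2 / ((t : ℝ) - 1) * (1 - 1 / (t : ℝ)) ^ (t - 1)
        - Real.log A / Real.log 2 / l - 1 / l) * (l * Real.log 2)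
        = r * l - Real.log A - Real.log 2 := by
      rw [hr]
      generalize (1 - 1 / (t : ℝ)) ^ (t - 1) = P
      field_simp
    rw [e1, e2] at h1
    linarith
  have hmain : 2 * n' * Real.exp (-(r * l)) ≤ 1 / A := by
    rw [Real.log_le_iff_le_exp (by positivity)] at hlog
    rw [Real.exp_neg, ← div_eq_mul_inv, div_le_div_iff₀ (Real.exp_pos _) hApos, one_mul]
    exact hlog
  have hfloor : ((⌊2 * n'⌋₊ : ℕ) : ℝ) ≤ 2 * n' := Nat.floor_le (by linarith)
  have hfloor' : 2 * n' < ((⌊2 * n'⌋₊ : ℕ) : ℝ) + 1 := Nat.lt_floor_add_one _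
  obtain ⟨M, hM⟩ := exists_few_badSets (l := l) ⌊2 * n'⌋₊ ht hd hl
    ((mul_le_mul_of_nonneg_right hfloor (Real.exp_pos _).le).trans hmain)
  obtain ⟨C, hC, hcard⟩ := exists_code_of_bad_le ht hd M
  refine ⟨C, hC, ?_⟩
  have hcard' : ((⌊2 * n'⌋₊ : ℕ) : ℝ) + 1 ≤ (C.card : ℝ) + ((badSets t d M).card : ℝ) := by
    exact_mod_cast hcard
  linarith
end

section
/- Let t ≥ 2 and d ≥ 1 be integers and let C be a finite set of vectors in F₂^l. Let X be the number of subsets S ⊆ C with 2 ≤ |S| ≤ t that are (t,d)-violated. Then there exists a subset C' ⊆ C with |C'| ≥ |C| − X such that C' is a weak (t,d)-superimposed code of length l. -/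
theorem weak_superimposed_alteration (t d l : ℕ) (ht : 2 ≤ t) (hd : 1 ≤ d)
    (C : Finset (Fin l → Bool))
    (X : ℕ)
    (hX : X = (C.powerset.filter (fun S =>
        2 ≤ S.card ∧ S.card ≤ t ∧ (exactlyOneCoords S).card ≤ d - 1)).card) :
    ∃ C' ⊆ C, C.card - X ≤ C'.card ∧ IsWeakSuperimposed t d l C' := by
  classical
  subst hX
  set V := C.powerset.filter (fun S =>
    2 ≤ S.card ∧ S.card ≤ t ∧ (exactlyOneCoords S).card ≤ d - 1) with hV
  -- `f` picks one vector from every nonempty set; violated sets have at least two.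
  have hf : ∀ S : Finset (Fin l → Bool), ∃ c, S.Nonempty → c ∈ S := fun S => by
    by_cases h : S.Nonempty
    · exact ⟨h.choose, fun _ => h.choose_spec⟩
    · exact ⟨fun _ => false, fun h' => absurd h' h⟩
  choose f hf using hf
  refine ⟨C \ V.image f, Finset.sdiff_subset, ?_, ?_⟩
  · exact (Nat.sub_le_sub_left Finset.card_image_le _).trans (Finset.le_card_sdiff _ _)
  · intro S hS h2 h3
    by_contra hlt
    have hSV : S ∈ V := Finset.mem_filter.2
      ⟨Finset.mem_powerset.2 (hS.trans Finset.sdiff_subset), h2, h3, by omega⟩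
    have hfS : f S ∈ S := hf S (Finset.card_pos.1 (by omega))
    exact (Finset.mem_sdiff.1 (hS hfS)).2 (Finset.mem_image_of_mem f hSV)
end

section
/- For all integers s and t with 2 ≤ s ≤ t, the inequality (s/(s−1))·(1 − 1/t)^(s−1) ≥ (t/(t−1))·(1 − 1/t)^(t−1) holds. -/
theorem rate_term_monotone (s t : ℕ) (hs : 2 ≤ s) (hst : s ≤ t) :
    (t : ℝ) / ((t : ℝ) - 1) * (1 - 1 / (t : ℝ)) ^ (t - 1) ≤
      (s : ℝ) / ((s : ℝ) - 1) * (1 - 1 / (t : ℝ)) ^ (s - 1) := by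
  -- Both factors decrease in the index: `n / (n - 1) = 1 + 1 / (n - 1)` does for `n > 1`, and the
  -- powers do because the base `1 - 1 / t`, the same on both sides, lies in `[0, 1]`.
  have hs' : (2 : ℝ) ≤ s := by exact_mod_cast hs
  have hst' : (s : ℝ) ≤ t := by exact_mod_cast hst
  have h0 : 0 ≤ 1 / (t : ℝ) := by positivity
  have h1 : 1 / (t : ℝ) ≤ 1 := by
    rw [div_le_one (by linarith)]
    linarith
  have hfrac : (t : ℝ) / ((t : ℝ) - 1) ≤ (s : ℝ) / ((s : ℝ) - 1) := by
    rw [div_le_div_iff₀ (by linarith) (by linarith)]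
    linarith
  have hpow : (1 - 1 / (t : ℝ)) ^ (t - 1) ≤ (1 - 1 / (t : ℝ)) ^ (s - 1) :=
    pow_le_pow_of_le_one (by linarith) (by linarith) (by omega)
  exact mul_le_mul hfrac hpow (pow_nonneg (by linarith) _)
    (div_nonneg (by linarith) (by linarith))
end

section
/- For all positive integers w, r, and d, the asymptotic rate of (w,r;d)-cover-free families satisfies limsup_{l→∞} log₂ N(w,r,d;l) / l ≥ w^w · r^r / ((w+r−1)·(w+r)^(w+r)). -/
/-!
The proof is a random construction followed by deletions. Let `p = w^w r^r / (w+r)^(w+r)`, and put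
each of the `l` points into each of `n` blocks independently with probability `w / (w+r)`. For
disjoint index sets `X, Y` of sizes `w, r`, a point lies in every block of `X` and in no block of
`Y` with probability `p`. By Markov's inequality for `(1/4) ^ (number of such points)`, fewer than
`d` points do so with probability at most `4^d (1 - 3p/4)^l ≤ 4^d exp (-3pl/4)` (`card_few_le`).
Some choice of blocks therefore has at most `n^(w+r) 4^d exp (-3pl/4)` bad pairs
(`sum_bad_le`, `exists_few_bad`). Deleting one block from each bad pair leaves a cover-free family
(`exists_coverFree_of_bad`).

Let `R = p / (w+r-1)` and `n = 2 ⌈2^(Rl)⌉`. Since `log 2 < 3/4`, the number of bad pairs is at most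
`n / 2` for large `l`, so `N(w,r;d;l) ≥ 2^(Rl)` for all large `l`.

Randomness is replaced by counting: a point's memberships are encoded by a uniformly chosen
column `Fin n → Fin (w + r)`, the point belonging to block `i` when the `i`-th entry is below `w`.
-/

/-- A `(w,r;d)`-cover-free family on the point set `Fin l`: for every pair of disjoint
subfamilies `X, Y` of blocks with `|X| = w` and `|Y| = r`, the set
`(⋂ A ∈ X, A) \ (⋃ B ∈ Y, B)` has at least `d` elements. -/
def IsCoverFree (w r d l : ℕ) (B : Finset (Finset (Fin l))) : Prop :=
  ∀ X ⊆ B, ∀ Y ⊆ B, Disjoint X Y → X.card = w → Y.card = r →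
    d ≤ ((X.inf id) \ (Y.sup id)).card

/-- The maximum number of blocks in a `(w,r;d)`-cover-free family on `l` points. -/
noncomputable def Ncf (w r d l : ℕ) : ℕ :=
  sSup {n | ∃ B : Finset (Finset (Fin l)), IsCoverFree w r d l B ∧ B.card = n}

open Finset in
/-- The pairs `(X, Y)` of disjoint index sets of sizes `w` and `r` that violate the cover-free
condition for the indexed blocks `A`. -/
def badPairs (w r d : ℕ) {n l : ℕ} (A : Fin n → Finset (Fin l)) :
    Finset (Finset (Fin n) × Finset (Fin n)) :=
  (powersetCard w univ ×ˢ powersetCard r univ).filter fun P =>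
    Disjoint P.1 P.2 ∧
      (univ.filter fun x => (∀ i ∈ P.1, x ∈ A i) ∧ ∀ j ∈ P.2, x ∉ A j).card < d

/-- Deleting the index of one block of `X` for every bad pair `(X, Y)` leaves a cover-free family.
The remaining blocks are automatically distinct: two equal ones could be put into `X` and `Y`. -/
lemma exists_coverFree_of_bad {w r d n l : ℕ} (hw : 1 ≤ w) (hr : 1 ≤ r) (hd : 1 ≤ d)
    (A : Fin n → Finset (Fin l)) (h : (badPairs w r d A).card + (w + r) ≤ n) :
    ∃ B : Finset (Finset (Fin l)), IsCoverFree w r d l B ∧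
      n ≤ B.card + (badPairs w r d A).card := by
  classical
  have hne : ∀ P ∈ badPairs w r d A, ∃ i, i ∈ P.1 := by
    intro P hP
    simp only [badPairs, Finset.mem_filter, Finset.mem_product, Finset.mem_powersetCard] at hP
    exact Finset.card_pos.mp (by omega)
  have : NeZero n := ⟨by omega⟩
  choose! g hg using hne
  set S : Finset (Fin n) := Finset.univ \ (badPairs w r d A).image g with hS
  have hScard : n ≤ S.card + (badPairs w r d A).card := by
    have h1 := Finset.card_sdiff_add_card (Finset.univ : Finset (Fin n))
      ((badPairs w r d A).image g)
    rw [← hS] at h1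
    have h2 : ((badPairs w r d A).image g).card ≤ _ := Finset.card_image_le
    have h3 : (Finset.univ : Finset (Fin n)).card ≤
        (Finset.univ ∪ (badPairs w r d A).image g).card :=
      Finset.card_le_card Finset.subset_union_left
    rw [Finset.card_univ, Fintype.card_fin] at h3
    omega
  have good : ∀ X ⊆ S, ∀ Y ⊆ S, Disjoint X Y → X.card = w → Y.card = r →
      d ≤ (Finset.univ.filter fun x => (∀ i ∈ X, x ∈ A i) ∧ ∀ j ∈ Y, x ∉ A j).card := by
    intro X hX Y hY hXY hXw hYr
    by_contra hlt
    have hP : (X, Y) ∈ badPairs w r d A := by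
      simp only [badPairs, Finset.mem_filter, Finset.mem_product, Finset.mem_powersetCard]
      exact ⟨⟨⟨Finset.subset_univ _, hXw⟩, ⟨Finset.subset_univ _, hYr⟩⟩, hXY, by omega⟩
    have h1 := hX (hg _ hP)
    rw [hS, Finset.mem_sdiff] at h1
    exact h1.2 (Finset.mem_image_of_mem _ hP)
  have hinj : Set.InjOn A S := by
    intro i hi j hj hij
    by_contra hne
    have hi' : i ∈ S := hi
    have hj' : j ∈ S := hj
    obtain ⟨X, hX1, hX2, hX3⟩ := Finset.exists_subsuperset_card_eq
      (s := {i}) (t := S.erase j) (n := w)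
      (by simp [hne, hi']) (by simpa using hw) (by rw [Finset.card_erase_of_mem hj']; omega)
    have hjX : j ∉ X := fun hj => by simpa using hX2 hj
    have hXS : X ⊆ S := hX2.trans (Finset.erase_subset _ _)
    obtain ⟨Y, hY1, hY2, hY3⟩ := Finset.exists_subsuperset_card_eq
      (s := {j}) (t := S \ X) (n := r)
      (by simp [hjX, hj']) (by simpa using hr)
      (by rw [Finset.card_sdiff_of_subset hXS]; omega)
    have h1 := good X hXS Y (hY2.trans Finset.sdiff_subset)
      (Finset.disjoint_of_subset_right hY2 Finset.disjoint_sdiff) hX3 hY3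
    obtain ⟨x, hx⟩ := Finset.card_pos.mp (lt_of_lt_of_le hd h1)
    rw [Finset.mem_filter] at hx
    have hiX : i ∈ X := hX1 (by simp)
    have hjY : j ∈ Y := hY1 (by simp)
    exact hx.2.2 j hjY (hij ▸ hx.2.1 i hiX)
  refine ⟨S.image A, ?_, by rw [Finset.card_image_of_injOn hinj]; exact hScard⟩
  intro X hX Y hY hXY hXw hYr
  obtain ⟨X', hX', rfl⟩ := Finset.subset_image_iff.mp hX
  obtain ⟨Y', hY', rfl⟩ := Finset.subset_image_iff.mp hY
  rw [Finset.card_image_of_injOn (hinj.mono hX')] at hXw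
  rw [Finset.card_image_of_injOn (hinj.mono hY')] at hYr
  have hdis : Disjoint X' Y' := by
    rw [Finset.disjoint_left] at hXY ⊢
    exact fun i h1 h2 => hXY (Finset.mem_image_of_mem A h1) (Finset.mem_image_of_mem A h2)
  refine (good X' hX' Y' hY' hdis hXw hYr).trans (Finset.card_le_card ?_)
  intro x hx
  simp only [Finset.mem_filter, Finset.mem_univ, true_and] at hx
  simp only [Finset.mem_sdiff, Finset.mem_inf, Finset.mem_sup, id, Finset.mem_image]
  refine ⟨?_, ?_⟩
  · rintro _ ⟨i, hi, rfl⟩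
    exact hx.1 i hi
  · rintro ⟨_, ⟨j, hj, rfl⟩, h2⟩
    exact hx.2 j hj h2

/-- The columns putting their point into all blocks of `X` and none of the blocks of `Y`. -/
def goodCols (w r : ℕ) {n : ℕ} (X Y : Finset (Fin n)) : Finset (Fin n → Fin (w + r)) :=
  Finset.univ.filter fun c => (∀ i ∈ X, (c i : ℕ) < w) ∧ ∀ j ∈ Y, ¬ (c j : ℕ) < w

lemma card_goodCols {w r n : ℕ} (hw : 1 ≤ w) {X Y : Finset (Fin n)} (hXY : Disjoint X Y)
    (hX : X.card = w) (hY : Y.card = r) :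
    ((goodCols w r X Y).card : ℝ) =
      (w : ℝ) ^ w * (r : ℝ) ^ r / ((w : ℝ) + r) ^ (w + r) * ((w : ℝ) + r) ^ n := by
  classical
  have hpos : (0 : ℝ) < (w : ℝ) + r := by positivity
  have h1 : goodCols w r X Y = Fintype.piFinset (fun i : Fin n =>
      Finset.univ.filter fun c : Fin (w + r) =>
        (i ∈ X → (c : ℕ) < w) ∧ (i ∈ Y → ¬ (c : ℕ) < w)) := by
    ext c
    simp only [goodCols, Finset.mem_filter, Finset.mem_univ, true_and, Fintype.mem_piFinset]
    exact ⟨fun h i => ⟨h.1 i, h.2 i⟩, fun h => ⟨fun i => (h i).1, fun i => (h i).2⟩⟩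
  have hlt : (Finset.univ.filter fun c : Fin (w + r) => (c : ℕ) < w).card = w := by
    rw [Fin.card_filter_val_lt]; omega
  have hge : (Finset.univ.filter fun c : Fin (w + r) => ¬ (c : ℕ) < w).card = r := by
    have := Finset.card_filter_add_card_filter_not (s := Finset.univ)
      (fun c : Fin (w + r) => (c : ℕ) < w)
    rw [hlt, Finset.card_univ, Fintype.card_fin] at this
    omega
  have h2 : ∀ i : Fin n, (((Finset.univ.filter fun c : Fin (w + r) =>
      (i ∈ X → (c : ℕ) < w) ∧ (i ∈ Y → ¬ (c : ℕ) < w)).card : ℕ) : ℝ) =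
      (if i ∈ X then (w : ℝ) / (w + r) else 1) * (if i ∈ Y then (r : ℝ) / (w + r) else 1) *
        ((w : ℝ) + r) := by
    intro i
    by_cases hiX : i ∈ X
    · have hiY : i ∉ Y := Finset.disjoint_left.mp hXY hiX
      simp only [hiX, hiY, forall_true_left, false_imp_iff, and_true, if_true, if_false, hlt]
      field_simp
    · by_cases hiY : i ∈ Y
      · simp only [hiX, hiY, forall_true_left, false_imp_iff, true_and, if_true, if_false, hge]
        field_simp
      · simp [hiX, hiY]
  rw [h1, Fintype.card_piFinset, Nat.cast_prod, Finset.prod_congr rfl (fun i _ => h2 i),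
    Finset.prod_mul_distrib, Finset.prod_mul_distrib, Finset.prod_ite_mem, Finset.prod_ite_mem,
    Finset.univ_inter, Finset.univ_inter, Finset.prod_const, Finset.prod_const, Finset.prod_const,
    hX, hY, Finset.card_univ, Fintype.card_fin]
  rw [div_pow, div_pow, pow_add]
  field_simp

/-- The blocks encoded by a matrix of columns, one column per point. -/
def blocks (w r : ℕ) {n l : ℕ} (M : Fin l → Fin n → Fin (w + r)) (i : Fin n) : Finset (Fin l) :=
  Finset.univ.filter fun x => (M x i : ℕ) < w

/-- Exponential Markov bound on the number of matrices for which fewer than `d` points have a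
column in `G`; `q` bounds the average over all columns of the weight `1/4` on `G` and `1` off `G`. -/
lemma card_few_le {α : Type*} [Fintype α] [DecidableEq α] (G : Finset α) (d l : ℕ) {q : ℝ}
    (hG : (Fintype.card α : ℝ) - 3 / 4 * G.card ≤ q * Fintype.card α) :
    (((Finset.univ : Finset (Fin l → α)).filter fun M =>
        (Finset.univ.filter fun x => M x ∈ G).card < d).card : ℝ) ≤
      4 ^ d * q ^ l * (Fintype.card α : ℝ) ^ l := by
  have hsum : ∑ c : α, (if c ∈ G then (1 / 4 : ℝ) else 1) =
      (Fintype.card α : ℝ) - 3 / 4 * G.card := by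
    have h : ∀ c : α, (if c ∈ G then (1 / 4 : ℝ) else 1) = 1 - 3 / 4 * (if c ∈ G then 1 else 0) := by
      intro c; split_ifs <;> norm_num
    rw [Finset.sum_congr rfl (fun c _ => h c), Finset.sum_sub_distrib, ← Finset.mul_sum]
    simp
  calc (((Finset.univ : Finset (Fin l → α)).filter fun M =>
        (Finset.univ.filter fun x => M x ∈ G).card < d).card : ℝ)
      = ∑ M : Fin l → α, if (Finset.univ.filter fun x => M x ∈ G).card < d then (1 : ℝ) else 0 := by
        simp
    _ ≤ ∑ M : Fin l → α, 4 ^ d * ∏ x, (if M x ∈ G then (1 / 4 : ℝ) else 1) := by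
        refine Finset.sum_le_sum fun M _ => ?_
        rw [Finset.prod_ite, Finset.prod_const, Finset.prod_const_one, mul_one]
        split_ifs with h
        · have h1 : (1 / 4 : ℝ) ^ d ≤ (1 / 4 : ℝ) ^ (Finset.univ.filter fun x => M x ∈ G).card :=
            pow_le_pow_of_le_one (by norm_num) (by norm_num) h.le
          calc (1 : ℝ) = 4 ^ d * (1 / 4 : ℝ) ^ d := by rw [← mul_pow]; norm_num
            _ ≤ _ := by gcongr
        · positivity
    _ = 4 ^ d * (∑ c : α, (if c ∈ G then (1 / 4 : ℝ) else 1)) ^ l := by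
        rw [← Finset.mul_sum, Fintype.sum_pow]
    _ ≤ 4 ^ d * (q * Fintype.card α) ^ l := by
        have : 0 ≤ ∑ c : α, (if c ∈ G then (1 / 4 : ℝ) else 1) :=
          Finset.sum_nonneg fun c _ => by split_ifs <;> norm_num
        rw [hsum] at this ⊢
        gcongr
    _ = _ := by rw [mul_pow]; ring

/-- First moment bound for the number of bad pairs of a random matrix. -/
lemma sum_bad_le_s12 {w r : ℕ} (d n l : ℕ) (hw : 1 ≤ w) {q : ℝ} (hq0 : 0 ≤ q)
    (hq : 1 - 3 / 4 * ((w : ℝ) ^ w * (r : ℝ) ^ r / ((w : ℝ) + r) ^ (w + r)) ≤ q) :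
    ∑ M : Fin l → Fin n → Fin (w + r), ((badPairs w r d (blocks w r M)).card : ℝ) ≤
      (n : ℝ) ^ (w + r) * (4 ^ d * q ^ l) * Fintype.card (Fin l → Fin n → Fin (w + r)) := by
  classical
  set C : ℝ := (Fintype.card (Fin n → Fin (w + r)) : ℝ) with hC
  have hCeq : C = ((w : ℝ) + r) ^ n := by simp [hC]
  have hcard : ((Fintype.card (Fin l → Fin n → Fin (w + r)) : ℕ) : ℝ) = C ^ l := by
    rw [Fintype.card_fun, Fintype.card_fin, Nat.cast_pow]
  set T : Finset (Finset (Fin n) × Finset (Fin n)) :=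
    Finset.powersetCard w Finset.univ ×ˢ Finset.powersetCard r Finset.univ with hT
  have hTcard : (T.card : ℝ) ≤ (n : ℝ) ^ (w + r) := by
    rw [hT, Finset.card_product, Finset.card_powersetCard, Finset.card_powersetCard,
      Finset.card_univ, Fintype.card_fin, pow_add]
    exact_mod_cast Nat.mul_le_mul (Nat.choose_le_pow n w) (Nat.choose_le_pow n r)
  have hpair : ∀ P ∈ T, ∑ M : Fin l → Fin n → Fin (w + r),
      (if Disjoint P.1 P.2 ∧ (Finset.univ.filter fun x => (∀ i ∈ P.1, x ∈ blocks w r M i) ∧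
        ∀ j ∈ P.2, x ∉ blocks w r M j).card < d then (1 : ℝ) else 0) ≤ 4 ^ d * q ^ l * C ^ l := by
    rintro ⟨X, Y⟩ hP
    simp only [hT, Finset.mem_product, Finset.mem_powersetCard] at hP
    by_cases hXY : Disjoint X Y
    · have hG : C - 3 / 4 * (goodCols w r X Y).card ≤ q * C := by
        rw [card_goodCols hw hXY hP.1.2 hP.2.2, ← hCeq]
        have : 0 ≤ C := by positivity
        nlinarith
      refine le_trans (le_of_eq ?_) (card_few_le (goodCols w r X Y) d l hG)
      simp [hXY, blocks, goodCols]
    · simp only [hXY, false_and, if_false, Finset.sum_const_zero]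
      have : 0 ≤ C := by positivity
      positivity
  calc ∑ M : Fin l → Fin n → Fin (w + r), ((badPairs w r d (blocks w r M)).card : ℝ)
      = ∑ M : Fin l → Fin n → Fin (w + r), ∑ P ∈ T,
        (if Disjoint P.1 P.2 ∧ (Finset.univ.filter fun x => (∀ i ∈ P.1, x ∈ blocks w r M i) ∧
          ∀ j ∈ P.2, x ∉ blocks w r M j).card < d then (1 : ℝ) else 0) := by
        refine Finset.sum_congr rfl fun M _ => ?_
        rw [badPairs, Finset.card_filter, Nat.cast_sum]
        refine Finset.sum_congr rfl fun P _ => ?_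
        rw [Nat.cast_ite, Nat.cast_one, Nat.cast_zero]
    _ ≤ ∑ P ∈ T, 4 ^ d * q ^ l * C ^ l := by
        rw [Finset.sum_comm]
        exact Finset.sum_le_sum hpair
    _ = T.card * (4 ^ d * q ^ l) * C ^ l := by rw [Finset.sum_const, nsmul_eq_mul]; ring
    _ ≤ _ := by
        rw [hcard]
        have : 0 ≤ C := by positivity
        gcongr

lemma exists_few_bad {w r : ℕ} (d n l : ℕ) (hw : 1 ≤ w) {q : ℝ} (hq0 : 0 ≤ q)
    (hq : 1 - 3 / 4 * ((w : ℝ) ^ w * (r : ℝ) ^ r / ((w : ℝ) + r) ^ (w + r)) ≤ q) :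
    ∃ A : Fin n → Finset (Fin l),
      ((badPairs w r d A).card : ℝ) ≤ (n : ℝ) ^ (w + r) * (4 ^ d * q ^ l) := by
  have : NeZero (w + r) := ⟨by omega⟩
  by_contra! h
  have h1 : ∑ M : Fin l → Fin n → Fin (w + r), (n : ℝ) ^ (w + r) * (4 ^ d * q ^ l) <
      ∑ M : Fin l → Fin n → Fin (w + r), ((badPairs w r d (blocks w r M)).card : ℝ) :=
    Finset.sum_lt_sum_of_nonempty Finset.univ_nonempty fun M _ => h _
  rw [Finset.sum_const, nsmul_eq_mul, Finset.card_univ, mul_comm] at h1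
  exact absurd (sum_bad_le_s12 d n l hw hq0 hq) (not_le.mpr h1)

lemma card_coverFree_le {w r d l : ℕ} :
    ∀ m ∈ {n | ∃ B : Finset (Finset (Fin l)), IsCoverFree w r d l B ∧ B.card = n}, m ≤ 2 ^ l := by
  rintro m ⟨B, -, rfl⟩
  simpa using Finset.card_le_univ B

lemma card_le_Ncf {w r d l : ℕ} {B : Finset (Finset (Fin l))} (h : IsCoverFree w r d l B) :
    B.card ≤ Ncf w r d l :=
  le_csSup ⟨_, card_coverFree_le⟩ ⟨B, h, rfl⟩

lemma Ncf_le (w r d l : ℕ) : Ncf w r d l ≤ 2 ^ l :=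
  csSup_le' card_coverFree_le

lemma logb_Ncf_div_le_one (w r d l : ℕ) : Real.logb 2 (Ncf w r d l) / l ≤ 1 := by
  refine div_le_one_of_le₀ ?_ (Nat.cast_nonneg l)
  rcases Nat.eq_zero_or_pos (Ncf w r d l) with h | h
  · simp [h]
  · rw [Real.logb_le_iff_le_rpow (by norm_num) (by exact_mod_cast h), Real.rpow_natCast]
    exact_mod_cast Ncf_le w r d l

theorem cover_free_rate_lower_bound (w r d : ℕ) (hw : 1 ≤ w) (hr : 1 ≤ r) (hd : 1 ≤ d) :
    (w : ℝ) ^ w * (r : ℝ) ^ r / (((w : ℝ) + r - 1) * ((w : ℝ) + r) ^ (w + r)) ≤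
      Filter.atTop.limsup (fun l : ℕ => Real.logb 2 (Ncf w r d l) / l) := by
  set p : ℝ := (w : ℝ) ^ w * (r : ℝ) ^ r / ((w : ℝ) + r) ^ (w + r) with hp
  have hw0 : (1 : ℝ) ≤ w := by exact_mod_cast hw
  have hr0 : (1 : ℝ) ≤ r := by exact_mod_cast hr
  have hp0 : 0 < p := by positivity
  obtain ⟨k, hk⟩ : ∃ k, w + r = k + 1 := ⟨w + r - 1, by omega⟩
  have hkR : (w : ℝ) + r - 1 = k := by
    have : ((w + r : ℕ) : ℝ) = ((k + 1 : ℕ) : ℝ) := by rw [hk]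
    push_cast at this
    linarith
  have hk0 : (0 : ℝ) < k := by linarith
  set R : ℝ := p / k with hR
  have hR0 : 0 < R := by positivity
  have hRk : R * k = p := by rw [hR]; field_simp
  have hlhs : (w : ℝ) ^ w * (r : ℝ) ^ r / (((w : ℝ) + r - 1) * ((w : ℝ) + r) ^ (w + r)) = R := by
    rw [hkR, hR, hp, div_div, mul_comm (k : ℝ)]
  rw [hlhs]
  -- `2 ^ (R l)` and `exp (3pl/4) / 2 ^ (pl)` both tend to infinity.
  have hlog : Real.log 2 < 3 / 4 := by linarith [Real.log_two_lt_d9]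
  have t1 : Filter.Tendsto (fun l : ℕ => Real.exp (Real.log 2 * R * l)) Filter.atTop Filter.atTop :=
    Real.tendsto_exp_atTop.comp
      (tendsto_natCast_atTop_atTop.const_mul_atTop (mul_pos (Real.log_pos (by norm_num)) hR0))
  have t2 : Filter.Tendsto (fun l : ℕ => Real.exp ((3 / 4 - Real.log 2) * p * l))
      Filter.atTop Filter.atTop :=
    Real.tendsto_exp_atTop.comp
      (tendsto_natCast_atTop_atTop.const_mul_atTop (mul_pos (by linarith) hp0))
  have key : ∀ᶠ l : ℕ in Filter.atTop, R ≤ Real.logb 2 (Ncf w r d l) / l := by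
    filter_upwards [t1.eventually_ge_atTop ((w : ℝ) + r), t2.eventually_ge_atTop (2 * 4 ^ d * 4 ^ k),
      Filter.eventually_ge_atTop 1] with l h1 h2 hl
    set a : ℝ := Real.exp (Real.log 2 * R * l) with ha
    set q : ℝ := Real.exp (-(3 / 4 * p)) with hqdef
    have ha1 : 1 ≤ a := by linarith
    set m : ℕ := ⌈a⌉₊ with hm
    have hma : a ≤ m := Nat.le_ceil a
    have hma2 : (m : ℝ) ≤ 2 * a := by
      have := Nat.ceil_lt_add_one (show 0 ≤ a by linarith)
      linarith
    have hq : 1 - 3 / 4 * p ≤ q := by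
      have := Real.add_one_le_exp (-(3 / 4 * p))
      linarith
    obtain ⟨A, hA⟩ := exists_few_bad d (2 * m) l hw (Real.exp_pos _).le hq
    -- With `n = 2m` the number of bad pairs is at most `n / 2 = m`.
    have hAm : ((badPairs w r d A).card : ℝ) ≤ m := by
      refine hA.trans ?_
      have hak : a ^ k * q ^ l * Real.exp ((3 / 4 - Real.log 2) * p * l) = 1 := by
        rw [ha, hqdef, ← Real.exp_nat_mul, ← Real.exp_nat_mul, ← Real.exp_add, ← Real.exp_add,
          Real.exp_eq_one_iff, ← hRk]
        ring
      have hpos : 0 ≤ a ^ k * q ^ l := by positivity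
      have hsmall : 2 * 4 ^ d * 4 ^ k * (a ^ k * q ^ l) ≤ 1 := by
        rw [← hak, mul_comm]
        gcongr
      calc ((2 * m : ℕ) : ℝ) ^ (w + r) * (4 ^ d * q ^ l)
          = (2 * m) ^ k * (2 * 4 ^ d * q ^ l) * m := by
            rw [hk]; push_cast; ring
        _ ≤ (4 * a) ^ k * (2 * 4 ^ d * q ^ l) * m := by
            have : 2 * (m : ℝ) ≤ 4 * a := by linarith
            gcongr ?_ * _ * _
            exact pow_le_pow_left₀ (by positivity) this k
        _ = (2 * 4 ^ d * 4 ^ k * (a ^ k * q ^ l)) * m := by rw [mul_pow]; ring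
        _ ≤ 1 * m := by gcongr
        _ = m := one_mul _
    have hAm' : (badPairs w r d A).card ≤ m := by exact_mod_cast hAm
    have hwr : w + r ≤ m := by
      have : ((w + r : ℕ) : ℝ) ≤ m := by push_cast; linarith
      exact_mod_cast this
    obtain ⟨B, hB, hBcard⟩ := exists_coverFree_of_bad hw hr hd A (by omega)
    have hmN : m ≤ Ncf w r d l := le_trans (by omega) (card_le_Ncf hB)
    have haN : a ≤ Ncf w r d l := hma.trans (by exact_mod_cast hmN)
    have hl0 : (0 : ℝ) < l := by exact_mod_cast hl
    rw [le_div_iff₀ hl0, Real.le_logb_iff_rpow_le (by norm_num) (by linarith),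
      Real.rpow_def_of_pos (by norm_num), ← mul_assoc]
    exact haN
  refine Filter.le_limsup_of_frequently_le key.frequently ?_
  exact Filter.isBoundedUnder_of ⟨1, fun l => logb_Ncf_div_le_one w r d l⟩
end
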